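/- arXiv:0902.2308 — 3 statements merged into one kernel-verified Lean document; each statement's English description precedes it below -/
import Mathlib

section
/- Let n ≥ 2 be an integer, ω > 0 and c > 0 real numbers, and let A be the n×n real symmetric matrix with diagonal entries A_{rr} = ω² and off-diagonal entries A_{r,r+1} = A_{r+1,r} = −(c/2)√(r(n−r)) for r = 1,…,n−1 (all other entries zero). Then A is positive definite if and only if c < 2ω²/(n−1). -/
open Finset Matrix

/-!
Write `a` for the lowering matrix of the harmonic oscillator truncated to `n` levels, so that `aᵀ a`
is the number operator, and set `D = √(n - 1 - aᵀ a)`. By Holstein and Primakoff, `J = D a` is the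
lowering operator of the spin `(n - 1) / 2` representation, and the interaction matrix is
`ω² - (c / 2) (J + Jᵀ)`. Since `D² + aᵀ a = n - 1`, completing the square gives
`(n - 1) - (J + Jᵀ) = (D - a)ᵀ (D - a)`, which is positive semidefinite. It is singular, because
`D - a` annihilates the vector of square roots of the binomial coefficients `(n - 1).choose i`.
Hence the least eigenvalue of the interaction matrix is `ω² - (c / 2) (n - 1)`.
-/

section ShiftedPosSemidef

variable {ι 𝕜 : Type*} [Fintype ι] [DecidableEq ι] [RCLike 𝕜]

open scoped ComplexOrder

lemma posDef_smul_one_add_iff_of_mulVec_eq_zero {P : Matrix ι ι 𝕜} (hP : P.PosSemidef)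
    {v : ι → 𝕜} (hv : v ≠ 0) (hPv : P *ᵥ v = 0) {s : ℝ} :
    (s • (1 : Matrix ι ι 𝕜) + P).PosDef ↔ 0 < s := by
  refine ⟨fun h => ?_, fun hs => (PosDef.one.smul hs).add_posSemidef hP⟩
  have hpos := h.dotProduct_mulVec_pos hv
  rw [add_mulVec, hPv, add_zero, smul_mulVec, one_mulVec, dotProduct_smul] at hpos
  exact (smul_pos_iff_of_pos_right (dotProduct_star_self_pos_iff.mpr hv)).mp hpos

end ShiftedPosSemidef

/-- The lowering (annihilation) operator of the harmonic oscillator, truncated to the levels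
`0, …, n - 1`: it sends the `j`-th basis vector to `√j` times the `(j - 1)`-st one. -/
noncomputable def oscillatorLowering (n : ℕ) : Matrix (Fin n) (Fin n) ℝ :=
  of fun i j => if (i : ℕ) + 1 = j then √j else 0

/-- The diagonal matrix `√(n - 1 - N)`, where `N` is the number operator `diag(0, …, n - 1)`;
it is the factor by which the spin lowering operator differs from the oscillator one. -/
noncomputable def sqrtCoNumber (n : ℕ) : Matrix (Fin n) (Fin n) ℝ :=
  diagonal fun i => √((n : ℝ) - 1 - i)

/-- The lowering operator of the spin `(n - 1) / 2` representation of `su(2)`, in the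
Holstein–Primakoff form. -/
noncomputable def spinLowering (n : ℕ) : Matrix (Fin n) (Fin n) ℝ :=
  sqrtCoNumber n * oscillatorLowering n

section SpinOperators

variable {n : ℕ}

lemma sub_one_sub_val_nonneg (i : Fin n) : (0 : ℝ) ≤ n - 1 - i := by
  have : (i : ℝ) + 1 ≤ n := mod_cast i.isLt
  linarith

lemma spinLowering_apply (i j : Fin n) :
    spinLowering n i j = if (i : ℕ) + 1 = j then √((i + 1) * (n - (i + 1))) else 0 := by
  simp only [spinLowering, sqrtCoNumber, oscillatorLowering, diagonal_mul, of_apply, mul_ite,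
    mul_zero]
  refine if_ctx_congr Iff.rfl (fun hij => ?_) fun _ => rfl
  rw [← hij, ← Real.sqrt_mul (sub_one_sub_val_nonneg i)]
  push_cast
  ring_nf

lemma sqrtCoNumber_mul_self :
    sqrtCoNumber n * sqrtCoNumber n = diagonal fun i : Fin n => (n : ℝ) - 1 - i := by
  simp only [sqrtCoNumber, diagonal_mul_diagonal, Real.mul_self_sqrt (sub_one_sub_val_nonneg _)]

lemma transpose_oscillatorLowering_mul_self :
    (oscillatorLowering n)ᵀ * oscillatorLowering n = diagonal fun i : Fin n => (i : ℝ) := by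
  ext j k
  simp only [mul_apply, transpose_apply, oscillatorLowering, of_apply, diagonal_apply]
  split_ifs with hjk
  · subst hjk
    obtain hj | hj := Nat.eq_zero_or_pos (j : ℕ)
    · simp [hj]
    · rw [sum_eq_single ⟨j - 1, by omega⟩ (fun i _ hi => ?_) (by simp)]
      · simp [Nat.sub_add_cancel hj]
      · have : (i : ℕ) + 1 ≠ j := fun h => hi (Fin.ext (Nat.eq_sub_of_add_eq h))
        simp [this]
  · refine sum_eq_zero fun i _ => ?_
    have : ¬((i : ℕ) + 1 = j ∧ (i : ℕ) + 1 = k) := fun h => hjk (Fin.ext (h.1.symm.trans h.2))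
    grind

lemma transpose_sqrtCoNumber_sub_oscillatorLowering_mul_self :
    (sqrtCoNumber n - oscillatorLowering n)ᵀ * (sqrtCoNumber n - oscillatorLowering n) =
      ((n : ℝ) - 1) • 1 - (spinLowering n + (spinLowering n)ᵀ) := by
  have hD : (sqrtCoNumber n)ᵀ = sqrtCoNumber n := diagonal_transpose _
  have hsum : sqrtCoNumber n * sqrtCoNumber n + (oscillatorLowering n)ᵀ * oscillatorLowering n =
      ((n : ℝ) - 1) • 1 := by
    rw [sqrtCoNumber_mul_self, transpose_oscillatorLowering_mul_self, diagonal_add,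
      smul_one_eq_diagonal]
    simp
  rw [← hsum, spinLowering, transpose_mul, transpose_sub, hD]
  noncomm_ring

lemma oscillatorLowering_mulVec_apply {f : ℕ → ℝ} (hf : f n = 0) (i : Fin n) :
    (oscillatorLowering n *ᵥ fun j => f j) i = √(i + 1) * f (i + 1) := by
  simp only [mulVec, dotProduct, oscillatorLowering, of_apply, ite_mul, zero_mul]
  obtain hi | hi := (Nat.succ_le_of_lt i.isLt).lt_or_eq
  · rw [sum_eq_single ⟨i + 1, hi⟩ (fun j _ hj => if_neg fun h => hj (Fin.ext h.symm)) (by simp)]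
    simp
  · rw [show (i : ℕ) + 1 = n from hi, hf, mul_zero]
    exact sum_eq_zero fun j _ => if_neg j.isLt.ne'

lemma sqrt_sub_mul_sqrt_choose {m k : ℕ} (hk : k ≤ m) :
    √((m : ℝ) - k) * √(m.choose k) = √((k : ℝ) + 1) * √(m.choose (k + 1)) := by
  rw [← Real.sqrt_mul (sub_nonneg.mpr (mod_cast hk)), ← Real.sqrt_mul (by positivity),
    ← Nat.cast_sub hk, mul_comm, mul_comm ((k : ℝ) + 1)]
  exact_mod_cast congrArg (fun x : ℕ => √(x : ℝ)) (Nat.choose_succ_right_eq m k).symm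

lemma sqrtCoNumber_sub_oscillatorLowering_mulVec_sqrt_choose :
    (sqrtCoNumber n - oscillatorLowering n) *ᵥ (fun i => √((n - 1).choose i)) = 0 := by
  ext i
  have hn : 1 ≤ n := i.pos
  have hlast : √((n - 1).choose n) = 0 := by
    simp [Nat.choose_eq_zero_of_lt (Nat.sub_one_lt_of_lt hn)]
  rw [sub_mulVec, Pi.sub_apply, sqrtCoNumber, mulVec_diagonal,
    oscillatorLowering_mulVec_apply (f := fun k => √((n - 1).choose k)) hlast, Pi.zero_apply,
    sub_eq_zero, ← sqrt_sub_mul_sqrt_choose (Nat.le_sub_one_of_lt i.isLt), Nat.cast_sub hn,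
    Nat.cast_one]

lemma posDef_smul_one_sub_smul_spinLowering_add_transpose_iff [NeZero n] {w t : ℝ} (ht : 0 ≤ t) :
    (w • 1 - t • (spinLowering n + (spinLowering n)ᵀ)).PosDef ↔ t * (n - 1) < w := by
  let B := sqrtCoNumber n - oscillatorLowering n
  let v : Fin n → ℝ := fun i => √((n - 1).choose i)
  have hsquare : w • 1 - t • (spinLowering n + (spinLowering n)ᵀ) =
      (w - t * (n - 1)) • 1 + t • (Bᵀ * B) := by
    rw [transpose_sqrtCoNumber_sub_oscillatorLowering_mul_self]
    module
  have hpsd : (t • (Bᵀ * B)).PosSemidef := (posSemidef_conjTranspose_mul_self B).smul ht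
  have hv : v ≠ 0 := fun h => by simpa [v] using congrFun h 0
  have hker : (t • (Bᵀ * B)) *ᵥ v = 0 := by
    rw [smul_mulVec, ← mulVec_mulVec, sqrtCoNumber_sub_oscillatorLowering_mulVec_sqrt_choose,
      mulVec_zero, smul_zero]
  rw [hsquare, posDef_smul_one_add_iff_of_mulVec_eq_zero hpsd hv hker, sub_pos]

end SpinOperators

/-- the interaction matrix of the Hamiltonian with Krawtchouk interaction
(diagonal entries `ω²`, off-diagonal entries `-(c/2)√(r(n-r))` for `r = 1,…,n-1`;
the index `i : Fin n` corresponds to `r = i+1`) is positive definite if and only if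
`c < 2ω²/(n-1)`. -/
theorem krawtchouk_interaction_posDef_iff (n : ℕ) (hn : 2 ≤ n) (ω c : ℝ)
    (hω : 0 < ω) (hc : 0 < c)
    (A : Matrix (Fin n) (Fin n) ℝ)
    (hA : ∀ i j : Fin n, A i j =
      if (i : ℕ) = (j : ℕ) then ω ^ 2
      else if (i : ℕ) + 1 = (j : ℕ) then
        -(c / 2) * Real.sqrt ((((i : ℕ) : ℝ) + 1) * ((n : ℝ) - (((i : ℕ) : ℝ) + 1)))
      else if (j : ℕ) + 1 = (i : ℕ) then
        -(c / 2) * Real.sqrt ((((j : ℕ) : ℝ) + 1) * ((n : ℝ) - (((j : ℕ) : ℝ) + 1)))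
      else 0) :
    A.PosDef ↔ c < 2 * ω ^ 2 / ((n : ℝ) - 1) := by
  have : NeZero n := ⟨by omega⟩
  have hn_sub : (0 : ℝ) < n - 1 := sub_pos.mpr (mod_cast hn)
  have hA_eq : A = ω ^ 2 • 1 - (c / 2) • (spinLowering n + (spinLowering n)ᵀ) := by
    ext i j
    simp only [hA, Matrix.sub_apply, Matrix.smul_apply, Matrix.add_apply, transpose_apply,
      spinLowering_apply, one_apply, Fin.ext_iff, smul_eq_mul]
    split_ifs <;> first | omega | ring
  rw [hA_eq, posDef_smul_one_sub_smul_spinLowering_add_transpose_iff (by positivity),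
    lt_div_iff₀ hn_sub]
  constructor <;> intro h <;> linarith
end

section
/- If β = −α with −1 < α < 1, then the diagonal recurrence coefficients of the Hahn polynomials satisfy A_i + C_i = (N − α)/2 for every i = 1,…,N, while A_0 + C_0 = N(α+1)/2. -/
/-- The Hahn recurrence coefficient
`A_i = (i+α+β+1)(i+α+1)(N-i)/((2i+α+β+1)(2i+α+β+2))` for `0 ≤ i < N`,
with the convention `A_N = 0`. -/
noncomputable def hahnA (N : ℕ) (α β : ℝ) (i : ℕ) : ℝ :=
  if i = N then 0
  else ((i : ℝ) + α + β + 1) * ((i : ℝ) + α + 1) * ((N : ℝ) - (i : ℝ)) /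
    ((2 * (i : ℝ) + α + β + 1) * (2 * (i : ℝ) + α + β + 2))

/-- The Hahn recurrence coefficient
`C_i = i(i+α+β+N+1)(i+β)/((2i+α+β)(2i+α+β+1))` for `1 ≤ i ≤ N`,
with the convention `C_0 = 0`. -/
noncomputable def hahnC (N : ℕ) (α β : ℝ) (i : ℕ) : ℝ :=
  if i = 0 then 0
  else (i : ℝ) * ((i : ℝ) + α + β + (N : ℝ) + 1) * ((i : ℝ) + β) /
    ((2 * (i : ℝ) + α + β) * (2 * (i : ℝ) + α + β + 1))

/-! The diagonal coefficient equals `N / 2 + (β - α) / 4` plus the correction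
`(α² - β²)(2N + α + β + 2) / (4(2i + α + β)(2i + α + β + 2))`. For `β = -α` and `i ≥ 1` the
correction vanishes and leaves `(N - α) / 2`. For `i = 0` its factor `α + β` also occurs in the
denominator and cancels, so the value at `0` is exceptional. -/

theorem hahnA_eq_div (N : ℕ) (α β : ℝ) (i : ℕ) :
    hahnA N α β i = ((i : ℝ) + α + β + 1) * (i + α + 1) * (N - i) /
      ((2 * i + α + β + 1) * (2 * i + α + β + 2)) := by
  unfold hahnA
  split_ifs with hi
  · simp [hi]
  · rfl

theorem hahnC_eq_div (N : ℕ) (α β : ℝ) (i : ℕ) :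
    hahnC N α β i = (i : ℝ) * (i + α + β + N + 1) * (i + β) /
      ((2 * i + α + β) * (2 * i + α + β + 1)) := by
  unfold hahnC
  split_ifs with hi
  · simp [hi]
  · rfl

theorem hahnA_add_hahnC (N : ℕ) (α β : ℝ) (i : ℕ) (h₀ : 2 * (i : ℝ) + α + β ≠ 0)
    (h₁ : 2 * (i : ℝ) + α + β + 1 ≠ 0) (h₂ : 2 * (i : ℝ) + α + β + 2 ≠ 0) :
    hahnA N α β i + hahnC N α β i =
      (N : ℝ) / 2 + (β - α) / 4 +
        (α ^ 2 - β ^ 2) * (2 * N + α + β + 2) /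
          (4 * (2 * i + α + β) * (2 * i + α + β + 2)) := by
  rw [hahnA_eq_div, hahnC_eq_div]
  set x : ℝ := 2 * i + α + β with hx
  field_simp
  rw [hx]
  ring

theorem hahnA_zero_add_hahnC_zero (N : ℕ) (α β : ℝ) (h : α + β + 1 ≠ 0) :
    hahnA N α β 0 + hahnC N α β 0 = (N : ℝ) * (α + 1) / (α + β + 2) := by
  have hA : hahnA N α β 0 =
      (α + β + 1) * ((N : ℝ) * (α + 1)) / ((α + β + 1) * (α + β + 2)) := by
    simp [hahnA_eq_div, mul_assoc, mul_comm (N : ℝ)]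
  have hC : hahnC N α β 0 = 0 := if_pos rfl
  rw [hA, hC, add_zero, mul_div_mul_left _ _ h]

theorem hahnA_add_hahnC_neg (N : ℕ) (α : ℝ) {i : ℕ} (hi : 1 ≤ i) :
    hahnA N α (-α) i + hahnC N α (-α) i = ((N : ℝ) - α) / 2 := by
  have hi_pos : (0 : ℝ) < i := by exact_mod_cast hi
  rw [hahnA_add_hahnC N α (-α) i (by linarith) (by linarith) (by linarith)]
  ring

theorem hahn_diagonal_beta_eq_neg_alpha_general (N : ℕ) (α : ℝ) :
    (∀ i : ℕ, 1 ≤ i → hahnA N α (-α) i + hahnC N α (-α) i = ((N : ℝ) - α) / 2) ∧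
      hahnA N α (-α) 0 + hahnC N α (-α) 0 = (N : ℝ) * (α + 1) / 2 := by
  refine ⟨fun i hi ↦ hahnA_add_hahnC_neg N α hi, ?_⟩
  simpa using hahnA_zero_add_hahnC_zero N α (-α) (by simp)

/-- if `β = -α` with `-1 < α < 1`, then `A_i + C_i = (N-α)/2` for every
`i = 1,…,N`, while `A_0 + C_0 = N(α+1)/2`. -/
theorem hahn_diagonal_beta_eq_neg_alpha (N : ℕ) (hN : 1 ≤ N) (α β : ℝ)
    (hα1 : -1 < α) (hα2 : α < 1) (hβ : β = -α) :
    (∀ i : ℕ, 1 ≤ i → i ≤ N → hahnA N α β i + hahnC N α β i = ((N : ℝ) - α) / 2) ∧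
      hahnA N α β 0 + hahnC N α β 0 = (N : ℝ) * (α + 1) / 2 := by
  subst hβ
  obtain ⟨h_pos, h_zero⟩ := hahn_diagonal_beta_eq_neg_alpha_general N α
  exact ⟨fun i hi _ ↦ h_pos i hi, h_zero⟩
end

section
/- Let n ≥ 2 be an integer, ω > 0, c > 0, and q > 0 with q ≠ 1, and let A be the n×n real symmetric matrix with diagonal entries A_{rr} = ω² and off-diagonal entries A_{r,r+1} = A_{r+1,r} = −c√(q^{r+1−2n}(1−q^r)(1−q^{n−r})) for r = 1,…,n−1 (all other entries zero). Then A is positive definite if and only if c·|1 − q^{1−n}| < ω²; equivalently, for q > 1 the condition is c(1 − q^{1−n}) < ω², and for 0 < q < 1 it is c(q^{1−n} − 1) < ω². -/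
open Finset Matrix

/-!
Up to sign, the off-diagonal entries are `c √(aᵢ bᵢ₊₁)`, where `aᵢ = |qⁱ - q^{n-1}| / q^{n-1}` and
`bᵢ = |1 - qⁱ| / q^{n-1}` are the recurrence coefficients of the dual q-Krawtchouk polynomials.
Since `qⁱ` lies between `1` and `q^{n-1}`, the sum `aᵢ + bᵢ` does not depend on `i`: it is
`L = |1 - q^{1-n}|`. Hence `A = (ω² - c L) I + c BᵀB`, with `B` the upper bidiagonal matrix with
entries `√aᵢ` and `-√bᵢ`. The last diagonal entry of `B` vanishes, so `c BᵀB` is positive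
semidefinite and singular, and the smallest eigenvalue of `A` is exactly `ω² - c L`.
-/

section Bidiagonal

variable {R : Type*}

/-- The `n × n` upper bidiagonal matrix with diagonal `α` and superdiagonal `β`; the entry of the
superdiagonal in column `j` is `β j`, so that `β 0` does not occur. -/
def upperBidiagonal [Zero R] (n : ℕ) (α β : ℕ → R) : Matrix (Fin n) (Fin n) R :=
  of fun i j => if (i : ℕ) = j then α i else if (i : ℕ) + 1 = j then β j else 0

/-- The `n × n` symmetric tridiagonal matrix with diagonal `d` and off-diagonal entries `e i` in
the positions `(i, i + 1)` and `(i + 1, i)`. -/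
def symmTridiagonal [Zero R] (n : ℕ) (d e : ℕ → R) : Matrix (Fin n) (Fin n) R :=
  of fun i j => if (i : ℕ) = j then d i else if (i : ℕ) + 1 = j then e i
    else if (j : ℕ) + 1 = i then e j else 0

lemma upperBidiagonal_det [CommRing R] (n : ℕ) (α β : ℕ → R) :
    (upperBidiagonal n α β).det = ∏ i ∈ range n, α i := by
  have upper : (upperBidiagonal n α β).IsUpperTriangular := fun i j (hji : j < i) => by
    have : (j : ℕ) < i := hji
    simp only [upperBidiagonal, of_apply, if_neg this.ne', if_neg (by omega : (i : ℕ) + 1 ≠ j)]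
  rw [det_of_isUpperTriangular upper, ← Fin.prod_univ_eq_prod_range]
  simp only [upperBidiagonal, of_apply, if_true]

lemma upperBidiagonal_transpose_mul_self [CommSemiring R] (n : ℕ) {α β : ℕ → R} (hβ : β 0 = 0) :
    (upperBidiagonal n α β)ᵀ * upperBidiagonal n α β =
      symmTridiagonal n (fun i => α i ^ 2 + β i ^ 2) (fun i => α i * β (i + 1)) := by
  ext ⟨j, hj⟩ ⟨k, hk⟩
  have split_entry (i : Fin n) : upperBidiagonal n α β i ⟨j, hj⟩ =
      (if i = ⟨j, hj⟩ then α j else 0) + (if (i : ℕ) + 1 = j then β j else 0) := by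
    simp only [upperBidiagonal, of_apply, Fin.ext_iff]
    split_ifs <;> grind
  simp only [mul_apply, transpose_apply, split_entry, add_mul, sum_add_distrib, ite_mul, zero_mul,
    sum_ite_eq', mem_univ, if_true]
  cases j with
  | zero =>
    simp only [upperBidiagonal, symmTridiagonal, of_apply, hβ, Nat.succ_ne_zero, if_false,
      sum_const_zero]
    split_ifs <;> subst_vars <;> ring
  | succ j =>
    have previous_row (i : Fin n) : (i : ℕ) + 1 = j + 1 ↔ i = ⟨j, by omega⟩ := by
      simp [Fin.ext_iff]
    simp only [previous_row, sum_ite_eq', mem_univ, if_true, upperBidiagonal, symmTridiagonal,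
      of_apply]
    split_ifs <;> first | omega | (subst_vars; ring)

end Bidiagonal

open scoped ComplexOrder in
lemma posDef_smul_one_add_iff {ι 𝕜 : Type*} [Fintype ι] [DecidableEq ι] [RCLike 𝕜]
    {P : Matrix ι ι 𝕜} (hP : P.PosSemidef) (hdet : P.det = 0) {μ : ℝ} :
    (μ • (1 : Matrix ι ι 𝕜) + P).PosDef ↔ 0 < μ := by
  refine ⟨fun h => ?_, fun hμ => (PosDef.one.smul hμ).add_posSemidef hP⟩
  obtain ⟨v, hv, hPv⟩ := exists_mulVec_eq_zero_iff.mpr hdet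
  have form_pos := h.dotProduct_mulVec_pos hv
  rw [add_mulVec, hPv, add_zero, smul_mulVec, one_mulVec, dotProduct_smul] at form_pos
  exact (smul_pos_iff_of_pos_right (dotProduct_star_self_pos_iff.mpr hv)).mp form_pos

lemma posDef_symmTridiagonal_iff {N : ℕ} {a b : ℕ → ℝ} {c d L : ℝ} (hc : 0 ≤ c)
    (ha : ∀ i, 0 ≤ a i) (hb : ∀ i, 0 ≤ b i) (hab : ∀ i ≤ N, a i + b i = L)
    (hb0 : b 0 = 0) (haN : a N = 0) :
    (symmTridiagonal (N + 1) (fun _ => d) fun i => -c * √(a i * b (i + 1))).PosDef ↔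
      c * L < d := by
  set B := upperBidiagonal (N + 1) (fun i => √(a i)) (fun i => -√(b i))
  have gram : Bᵀ * B =
      symmTridiagonal (N + 1) (fun i => a i + b i) (fun i => -√(a i * b (i + 1))) := by
    rw [upperBidiagonal_transpose_mul_self _ (by simp [hb0])]
    simp only [neg_sq, Real.sq_sqrt, ha, hb, mul_neg, Real.sqrt_mul]
  have decomposition : (symmTridiagonal (N + 1) (fun _ => d) fun i => -c * √(a i * b (i + 1))) =
      (d - c * L) • (1 : Matrix (Fin (N + 1)) (Fin (N + 1)) ℝ) + c • (Bᵀ * B) := by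
    ext i j
    have row_sum := hab i (by omega)
    simp only [gram, symmTridiagonal, Matrix.add_apply, Matrix.smul_apply, one_apply, of_apply,
      smul_eq_mul, Fin.ext_iff]
    split_ifs <;> grind
  have singular : (c • (Bᵀ * B)).det = 0 := by
    simp [B, upperBidiagonal_det, prod_range_succ, haN]
  have posSemidef : (c • (Bᵀ * B)).PosSemidef := by
    simpa only [conjTranspose_eq_transpose_of_trivial] using
      (posSemidef_conjTranspose_mul_self B).smul hc
  rw [decomposition, posDef_smul_one_add_iff posSemidef singular, sub_pos]

lemma pow_sub_pow_mul_one_sub_pow_nonneg {R : Type*} [Ring R] [LinearOrder R]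
    [IsStrictOrderedRing R] {q : R} (hq : 0 ≤ q) {i k : ℕ} (hik : i ≤ k) (l : ℕ) :
    0 ≤ (q ^ i - q ^ k) * (1 - q ^ l) := by
  rcases le_total q 1 with h | h
  · exact mul_nonneg (sub_nonneg.mpr (pow_le_pow_of_le_one hq h hik))
      (sub_nonneg.mpr (pow_le_one₀ hq h))
  · exact mul_nonneg_of_nonpos_of_nonpos (sub_nonpos.mpr (pow_le_pow_right₀ h hik))
      (sub_nonpos.mpr (one_le_pow₀ h))

section DualQKrawtchouk

/-- The coefficient `|1 - q^{i-N}|` of the degree `i + 1` term in the three-term recurrence at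
degree `i` of the dual q-Krawtchouk polynomials (their parameter `c` being `-1`), in absolute value:
the birth rate in state `i` of the associated birth-death process. It is written with natural
exponents only. -/
noncomputable def dqKrawtchoukBirthRate (q : ℝ) (N i : ℕ) : ℝ := |q ^ i - q ^ N| / q ^ N

/-- The coefficient `q^{-N} |1 - q^i|` of the degree `i - 1` term in the three-term recurrence at
degree `i` of the dual q-Krawtchouk polynomials (their parameter `c` being `-1`), in absolute value:
the death rate in state `i` of the associated birth-death process. -/
noncomputable def dqKrawtchoukDeathRate (q : ℝ) (N i : ℕ) : ℝ := |1 - q ^ i| / q ^ N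

variable {q : ℝ} {N i : ℕ}

lemma dqKrawtchoukBirthRate_nonneg (hq : 0 ≤ q) (N i : ℕ) : 0 ≤ dqKrawtchoukBirthRate q N i :=
  div_nonneg (abs_nonneg _) (pow_nonneg hq N)

lemma dqKrawtchoukDeathRate_nonneg (hq : 0 ≤ q) (N i : ℕ) : 0 ≤ dqKrawtchoukDeathRate q N i :=
  div_nonneg (abs_nonneg _) (pow_nonneg hq N)

lemma dqKrawtchoukBirthRate_add_dqKrawtchoukDeathRate (hq : 0 < q) (hi : i ≤ N) :
    dqKrawtchoukBirthRate q N i + dqKrawtchoukDeathRate q N i = |1 - q ^ (-N : ℤ)| := by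
  have same_signs := mul_nonneg_iff.mp (pow_sub_pow_mul_one_sub_pow_nonneg hq.le hi i)
  calc dqKrawtchoukBirthRate q N i + dqKrawtchoukDeathRate q N i
      = |q ^ i - q ^ N + (1 - q ^ i)| / q ^ N := by
        rw [dqKrawtchoukBirthRate, dqKrawtchoukDeathRate, ← add_div,
          (abs_add_eq_add_abs_iff _ _).mpr same_signs]
    _ = |(1 - q ^ N) / q ^ N| := by
        rw [add_comm, sub_add_sub_cancel, abs_div, abs_of_pos (pow_pos hq N)]
    _ = |1 - q ^ (-N : ℤ)| := by
        rw [abs_sub_comm 1, _root_.zpow_neg, zpow_natCast, sub_div, one_div,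
          div_self (pow_pos hq N).ne']

lemma dqKrawtchoukBirthRate_mul_dqKrawtchoukDeathRate_succ (hq : 0 < q) (hi : i ≤ N) :
    dqKrawtchoukBirthRate q N i * dqKrawtchoukDeathRate q N (i + 1) =
      q ^ ((i : ℤ) + 2 - 2 * (N + 1 : ℕ)) * (1 - q ^ (i + 1)) * (1 - q ^ (N - i)) := by
  have same_signs := pow_sub_pow_mul_one_sub_pow_nonneg hq.le hi (i + 1)
  have prefactor : q ^ ((i : ℤ) + 2 - 2 * (N + 1 : ℕ)) = q ^ i / (q ^ N) ^ 2 := by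
    rw [← pow_mul, ← zpow_natCast, ← zpow_natCast, ← zpow_sub₀ hq.ne']
    congr 1
    push_cast
    ring
  have factorization : q ^ i - q ^ N = q ^ i * (1 - q ^ (N - i)) := by
    rw [mul_sub, mul_one, pow_mul_pow_sub q hi]
  rw [dqKrawtchoukBirthRate, dqKrawtchoukDeathRate, div_mul_div_comm, ← abs_mul,
    abs_of_nonneg same_signs, prefactor, factorization]
  ring

end DualQKrawtchouk

/-- the interaction matrix of the Hamiltonian with dual q-Krawtchouk
interaction (diagonal entries `ω²`, off-diagonal entries
`-c√(q^{r+1-2n}(1-q^r)(1-q^{n-r}))` for `r = 1,…,n-1`; the index `i : Fin n`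
corresponds to `r = i+1`) is positive definite if and only if `c|1 - q^{1-n}| < ω²`;
equivalently, for `q > 1` the condition is `c(1 - q^{1-n}) < ω²`, and for `0 < q < 1`
it is `c(q^{1-n} - 1) < ω²`. -/
theorem dqKrawtchouk_interaction_posDef_iff (n : ℕ) (hn : 2 ≤ n) (ω c q : ℝ)
    (hω : 0 < ω) (hc : 0 < c) (hq : 0 < q) (hq1 : q ≠ 1)
    (A : Matrix (Fin n) (Fin n) ℝ)
    (hA : ∀ i j : Fin n, A i j =
      if (i : ℕ) = (j : ℕ) then ω ^ 2
      else if (i : ℕ) + 1 = (j : ℕ) then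
        -c * Real.sqrt (q ^ (((i : ℕ) : ℤ) + 2 - 2 * (n : ℤ)) *
          (1 - q ^ ((i : ℕ) + 1)) * (1 - q ^ (n - ((i : ℕ) + 1))))
      else if (j : ℕ) + 1 = (i : ℕ) then
        -c * Real.sqrt (q ^ (((j : ℕ) : ℤ) + 2 - 2 * (n : ℤ)) *
          (1 - q ^ ((j : ℕ) + 1)) * (1 - q ^ (n - ((j : ℕ) + 1))))
      else 0) :
    (A.PosDef ↔ c * |1 - q ^ (1 - (n : ℤ))| < ω ^ 2) ∧
      (1 < q → (A.PosDef ↔ c * (1 - q ^ (1 - (n : ℤ))) < ω ^ 2)) ∧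
      (q < 1 → (A.PosDef ↔ c * (q ^ (1 - (n : ℤ)) - 1) < ω ^ 2)) := by
  obtain ⟨N, rfl⟩ : ∃ N, n = N + 1 := ⟨n - 1, by omega⟩
  have tridiagonal : A = symmTridiagonal (N + 1) (fun _ => ω ^ 2) fun i =>
      -c * √(dqKrawtchoukBirthRate q N i * dqKrawtchoukDeathRate q N (i + 1)) := by
    ext i j
    rw [hA]
    simp only [symmTridiagonal, of_apply, Nat.add_sub_add_right]
    rw [dqKrawtchoukBirthRate_mul_dqKrawtchoukDeathRate_succ hq (by omega),
      dqKrawtchoukBirthRate_mul_dqKrawtchoukDeathRate_succ hq (by omega)]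
  have posDef_iff : A.PosDef ↔ c * |1 - q ^ (1 - (N + 1 : ℕ) : ℤ)| < ω ^ 2 := by
    rw [tridiagonal, show (1 - (N + 1 : ℕ) : ℤ) = -N by push_cast; ring]
    exact posDef_symmTridiagonal_iff hc.le (dqKrawtchoukBirthRate_nonneg hq.le N)
      (dqKrawtchoukDeathRate_nonneg hq.le N)
      (fun _ => dqKrawtchoukBirthRate_add_dqKrawtchoukDeathRate hq)
      (by simp [dqKrawtchoukDeathRate]) (by simp [dqKrawtchoukBirthRate])
  refine ⟨posDef_iff, fun h => ?_, fun h => ?_⟩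
  · rw [posDef_iff, abs_of_nonneg (sub_nonneg.mpr (zpow_le_one_of_nonpos₀ h.le (by omega)))]
  · rw [posDef_iff, abs_sub_comm,
      abs_of_nonneg (sub_nonneg.mpr (one_le_zpow_of_nonpos₀ hq h.le (by omega)))]
end
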